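/- There exists no monic real polynomial P = x^7 + a_6 x^6 + ⋯ + a_0 of degree 7 satisfying simultaneously: (i) a_0 > 0, and either a_j ≤ 0 for all 1 ≤ j ≤ 6 (closure of Σ_{1,6,1}), or a_j ≤ 0 for 2 ≤ j ≤ 6 and a_1 ≥ 0 (closure of Σ_{1,5,2}); (ii) P has 5 negative real roots counted with multiplicity; (iii) P has either a pair of nonreal complex conjugate roots or a positive real root of multiplicity at least 2. -/

import Mathlib

/-!
Write `P = (X + s₁)⋯(X + s₅) (X² + bX + c)` with all `sᵢ > 0`, and let `eₖ` be the elementary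
symmetric functions of the `sᵢ`. A nonreal root or a positive double root belongs to the quadratic
factor, so `b² ≤ 4c`. Only two of the sign conditions are needed:

* the coefficient of `X⁶` is `e₁ + b ≤ 0`, so `B := -b ≥ e₁ > 0`;
* the coefficient of `X³` is `e₄ + b e₃ + c e₂ ≤ 0`, so
  `B e₃ > c e₂ ≥ B² e₂ / 4`, that is, `4 e₃ > B e₂ ≥ e₁ e₂`.

The last inequality contradicts `e₁ e₂ ≥ 5 e₃ > 4 e₃`, which follows by adding up the inequalities
`sᵢ (sⱼ - sₖ)² ≥ 0`.
-/

open Polynomial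

/-- The inequality `4 e₃ ≤ e₁ e₂` for five positive reals. -/
lemma four_mul_esymm_three_le (p q r s t : ℝ) (hp : 0 < p) (hq : 0 < q) (hr : 0 < r)
    (hs : 0 < s) (ht : 0 < t) :
    4 * (p*q*r + p*q*s + p*q*t + p*r*s + p*r*t + p*s*t + q*r*s + q*r*t + q*s*t + r*s*t) ≤
      (p + q + r + s + t) *
        (p*q + p*r + p*s + p*t + q*r + q*s + q*t + r*s + r*t + s*t) := by
  have key : ∀ a b c : ℝ, 0 < a → 0 < b → 0 < c →
      6 * (a*b*c) ≤ a*(b^2 + c^2) + b*(a^2 + c^2) + c*(a^2 + b^2) := by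
    intro a b c ha hb hc
    nlinarith [mul_nonneg ha.le (sq_nonneg (b - c)), mul_nonneg hb.le (sq_nonneg (a - c)),
      mul_nonneg hc.le (sq_nonneg (a - b))]
  have hpos : 0 < p*q*r + p*q*s + p*q*t + p*r*s + p*r*t + p*s*t + q*r*s + q*r*t + q*s*t
      + r*s*t := by positivity
  linarith [key p q r hp hq hr, key p q s hp hq hs, key p q t hp hq ht, key p r s hp hr hs,
    key p r t hp hr ht, key p s t hp hs ht, key q r s hq hr hs, key q r t hq hr ht,
    key q s t hq hs ht, key r s t hr hs ht]

/-- The sign conditions on the coefficients of `X⁶` and `X³` are incompatible with a quadratic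
factor of nonpositive discriminant. -/
lemma sign_conditions_false (p q r s t b c : ℝ) (hp : 0 < p) (hq : 0 < q) (hr : 0 < r)
    (hs : 0 < s) (ht : 0 < t) (hd : b ^ 2 ≤ 4 * c)
    (h6 : p + q + r + s + t + b ≤ 0)
    (h3 : (p*q*r*s + p*q*r*t + p*q*s*t + p*r*s*t + q*r*s*t)
      + b * (p*q*r + p*q*s + p*q*t + p*r*s + p*r*t + p*s*t + q*r*s + q*r*t + q*s*t + r*s*t)
      + c * (p*q + p*r + p*s + p*t + q*r + q*s + q*t + r*s + r*t + s*t) ≤ 0) : False := by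
  have hE := four_mul_esymm_three_le p q r s t hp hq hr hs ht
  have h4 : 0 < p*q*r*s + p*q*r*t + p*q*s*t + p*r*s*t + q*r*s*t := by positivity
  have h2 : 0 < p*q + p*r + p*s + p*t + q*r + q*s + q*t + r*s + r*t + s*t := by positivity
  have h1 : 0 < p + q + r + s + t := by positivity
  generalize p*q*r*s + p*q*r*t + p*q*s*t + p*r*s*t + q*r*s*t = e4 at *
  generalize p*q + p*r + p*s + p*t + q*r + q*s + q*t + r*s + r*t + s*t = e2 at *
  generalize p*q*r + p*q*s + p*q*t + p*r*s + p*r*t + p*s*t + q*r*s + q*r*t + q*s*t + r*s*t = e3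
    at *
  generalize p + q + r + s + t = e1 at *
  have hb : 0 < -b := by linarith
  have k1 := mul_le_mul_of_nonneg_right hd h2.le
  have k2 := mul_le_mul_of_nonneg_left hE hb.le
  have k3 : 0 ≤ (-b) * e2 * (-b - e1) := by
    have : 0 ≤ -b - e1 := by linarith
    positivity
  nlinarith

/-- There is no monic real degree-7 polynomial `P` with `P(0) > 0` whose coefficient signs lie
in the closure of `Σ_{1,6,1}` or of `Σ_{1,5,2}`, having `5` negative roots counted with
multiplicity and either a nonreal conjugate pair of roots or a positive root of
multiplicity at least `2`. -/
theorem stmt13 :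
    ¬ ∃ P : Polynomial ℝ, P.Monic ∧ P.natDegree = 7 ∧
      P.coeff 0 > 0 ∧
      ((∀ j, 1 ≤ j → j ≤ 6 → P.coeff j ≤ 0) ∨
        ((∀ j, 2 ≤ j → j ≤ 6 → P.coeff j ≤ 0) ∧ 0 ≤ P.coeff 1)) ∧
      P.roots.countP (fun x => x < 0) = 5 ∧
      ((∃ z : ℂ, Polynomial.aeval z P = 0 ∧ z.im ≠ 0) ∨
        (∃ x : ℝ, 0 < x ∧ 2 ≤ P.rootMultiplicity x)) := by
  rintro ⟨P, hP, hdeg, -, hsign, hcount, hroot⟩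
  have hs : ∀ j, 2 ≤ j → j ≤ 6 → P.coeff j ≤ 0 := by
    rcases hsign with h | h
    · exact fun j h2 h6 => h j (by omega) h6
    · exact h.1
  rw [Multiset.countP_eq_card_filter] at hcount
  set S := P.roots.filter (fun x => x < 0) with hS
  have hneg : ∀ x ∈ S, x < 0 := fun x hx => (Multiset.mem_filter.1 hx).2
  have hdvd : (S.map fun a => X - C a).prod ∣ P :=
    (Multiset.prod_X_sub_C_dvd_iff_le_roots hP.ne_zero S).2 (Multiset.filter_le _ _)
  obtain ⟨l, hl⟩ := Quot.exists_rep S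
  have hl' : S = (l : Multiset ℝ) := hl.symm
  rw [hl'] at hcount hneg hdvd
  rw [Multiset.coe_card] at hcount
  obtain ⟨p, q, r, s, t, rfl⟩ : ∃ p q r s t, l = [p, q, r, s, t] := by
    match l, hcount with
    | [p, q, r, s, t], _ => exact ⟨p, q, r, s, t, rfl⟩
  simp at hneg
  obtain ⟨hp, hq, hr, hs', ht⟩ := hneg
  have hprod : ((([p, q, r, s, t] : List ℝ) : Multiset ℝ).map fun a => X - C a).prod
      = (X - C p) * (X - C q) * (X - C r) * (X - C s) * (X - C t) := by
    simp [mul_assoc]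
  rw [hprod] at hdvd
  obtain ⟨Q, hQ⟩ := hdvd
  have hM : ((X - C p) * (X - C q) * (X - C r) * (X - C s) * (X - C t)).Monic := by
    monicity!
  have hMd : ((X - C p) * (X - C q) * (X - C r) * (X - C s) * (X - C t)).natDegree = 5 := by
    compute_degree!
  have hQm : Q.Monic := hM.of_mul_monic_left (hQ ▸ hP)
  have hQd : Q.natDegree = 2 := by
    have := hM.natDegree_mul hQm
    rw [← hQ, hdeg, hMd] at this
    omega
  obtain ⟨b, c, rfl⟩ : ∃ b c : ℝ, Q = X ^ 2 + C b * X + C c := by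
    refine ⟨Q.coeff 1, Q.coeff 0, ?_⟩
    have h2 : Q.coeff 2 = 1 := by rw [← hQd]; exact hQm
    conv_lhs => rw [Q.as_sum_range_C_mul_X_pow, hQd]
    simp [Finset.sum_range_succ, h2]
    ring
  have hd : b ^ 2 ≤ 4 * c := by
    rcases hroot with ⟨z, hz, him⟩ | ⟨x, hx, hmul⟩
    · have hne : ∀ a : ℝ, z - (a : ℂ) ≠ 0 := by
        intro a h
        apply him
        simpa using congrArg Complex.im h
      rw [hQ] at hz
      simp [hne] at hz
      have hre := congrArg Complex.re hz
      have hi := congrArg Complex.im hz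
      simp [pow_two] at hre hi
      have hb : b = -2 * z.re := by
        apply mul_right_cancel₀ him
        linarith
      rw [hb] at hre ⊢
      nlinarith [sq_nonneg z.im]
    · -- `P` and its derivative vanish at `x`, hence so do the quadratic factor and its own derivative.
      obtain ⟨h0, h1⟩ := (one_lt_rootMultiplicity_iff_isRoot hP.ne_zero).1 hmul
      have n1 : x - p ≠ 0 := by linarith
      have n2 : x - q ≠ 0 := by linarith
      have n3 : x - r ≠ 0 := by linarith
      have n4 : x - s ≠ 0 := by linarith
      have n5 : x - t ≠ 0 := by linarith
      rw [hQ, IsRoot] at h0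
      rw [hQ, derivative_mul, IsRoot, eval_add, eval_mul, eval_mul] at h1
      have hq0 : eval x (X ^ 2 + C b * X + C c) = 0 := by
        rw [eval_mul] at h0
        refine (mul_eq_zero.1 h0).resolve_left ?_
        simp [n1, n2, n3, n4, n5]
      rw [hq0, mul_zero, zero_add] at h1
      have hq1 := (mul_eq_zero.1 h1).resolve_left (by simp [n1, n2, n3, n4, n5])
      simp at hq0 hq1
      have hb : b = -2 * x := by linarith
      rw [hb] at hq0 ⊢
      nlinarith
  have hexp : ∃ u v w y z : ℝ, P = X ^ 7 + C (-p + -q + -r + -s + -t + b) * X ^ 6 + C u * X ^ 5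
      + C v * X ^ 4
      + C ((p*q*r*s + p*q*r*t + p*q*s*t + p*r*s*t + q*r*s*t)
        - b * (p*q*r + p*q*s + p*q*t + p*r*s + p*r*t + p*s*t + q*r*s + q*r*t + q*s*t + r*s*t)
        + c * (p*q + p*r + p*s + p*t + q*r + q*s + q*t + r*s + r*t + s*t)) * X ^ 3
      + C w * X ^ 2 + C y * X + C z := by
    refine ⟨(p*q + p*r + p*s + p*t + q*r + q*s + q*t + r*s + r*t + s*t)
        - b * (p + q + r + s + t) + c,
      -(p*q*r + p*q*s + p*q*t + p*r*s + p*r*t + p*s*t + q*r*s + q*r*t + q*s*t + r*s*t)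
        + b * (p*q + p*r + p*s + p*t + q*r + q*s + q*t + r*s + r*t + s*t)
        - c * (p + q + r + s + t),
      -(p*q*r*s*t) + b * (p*q*r*s + p*q*r*t + p*q*s*t + p*r*s*t + q*r*s*t)
        - c * (p*q*r + p*q*s + p*q*t + p*r*s + p*r*t + p*s*t + q*r*s + q*r*t + q*s*t + r*s*t),
      -b * (p*q*r*s*t) + c * (p*q*r*s + p*q*r*t + p*q*s*t + p*r*s*t + q*r*s*t),
      -c * (p*q*r*s*t), ?_⟩
    rw [hQ]
    simp only [map_add, map_sub, map_mul, map_neg]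
    ring
  obtain ⟨u, v, w, y, z, hexp⟩ := hexp
  have h6 := hs 6 (by norm_num) (by norm_num)
  have h3 := hs 3 (by norm_num) (by norm_num)
  rw [hexp] at h6 h3
  simp only [coeff_add, coeff_C_mul, coeff_X_pow, coeff_X, coeff_C] at h6 h3
  norm_num at h6 h3
  refine sign_conditions_false (-p) (-q) (-r) (-s) (-t) b c (by linarith) (by linarith)
    (by linarith) (by linarith) (by linarith) hd (by linarith) ?_
  linarith
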